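/- arXiv:2010.15320 — 3 statements merged into one kernel-verified Lean document; each statement's English description precedes it below -/
import Mathlib

section
/- Let n be a positive natural number and work in ℝⁿ with the Euclidean inner product ⟨·,·⟩ and norm ‖·‖. Let z, d ∈ ℝⁿ, let ρ ≥ 0 with ‖d‖ ≤ ρ, and let ξ > 0. Define the robust control term r ∈ ℝⁿ by r = −ρ z/‖z‖ if ‖z‖ > ξ, and r = −(ρ/ξ) z if ‖z‖ ≤ ξ. Then ⟨z, r + d⟩ ≤ ρ ξ / 4. -/
open scoped RealInnerProductSpace

/-! By Cauchy–Schwarz the disturbance contributes at most `ρ ‖z‖`, and a feedback `-c • z`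
contributes exactly `-c ‖z‖ ^ 2`. Outside the boundary layer the gain `c = ρ / ‖z‖` makes the two
cancel; inside, the gain `c = ρ / ξ` leaves a concave quadratic in `‖z‖`, whose maximum `ρ ξ / 4`
is attained at `‖z‖ = ξ / 2`. -/

theorem mul_sub_div_mul_sq_le {K : Type*} [Field K] [LinearOrder K] [IsStrictOrderedRing K]
    {a b : K} (ha : 0 ≤ a) (hb : 0 < b) (t : K) :
    a * t - a / b * t ^ 2 ≤ a * b / 4 := by
  have complete_square : a * t - a / b * t ^ 2 = a * b / 4 - a / b * (t - b / 2) ^ 2 := by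
    field_simp
    ring
  rw [complete_square]
  exact sub_le_self _ (by positivity)

section InnerProductSpace

variable {E : Type*} [SeminormedAddCommGroup E] [InnerProductSpace ℝ E] {d : E} {ρ : ℝ}

theorem inner_neg_smul_add_le (z : E) (hd : ‖d‖ ≤ ρ) (c : ℝ) :
    ⟪z, -c • z + d⟫ ≤ ρ * ‖z‖ - c * ‖z‖ ^ 2 :=
  calc ⟪z, -c • z + d⟫ = ⟪z, d⟫ - c * ‖z‖ ^ 2 := by
        rw [inner_add_right, real_inner_smul_right, real_inner_self_eq_norm_sq]
        ring
    _ ≤ ‖z‖ * ‖d‖ - c * ‖z‖ ^ 2 := by gcongr; exact real_inner_le_norm z d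
    _ ≤ ρ * ‖z‖ - c * ‖z‖ ^ 2 := by rw [mul_comm]; gcongr

theorem inner_neg_div_norm_smul_add_nonpos (z : E) (hd : ‖d‖ ≤ ρ) :
    ⟪z, -(ρ / ‖z‖) • z + d⟫ ≤ 0 :=
  calc ⟪z, -(ρ / ‖z‖) • z + d⟫ ≤ ρ * ‖z‖ - ρ / ‖z‖ * ‖z‖ ^ 2 := inner_neg_smul_add_le z hd _
    _ = 0 := by field_simp; ring

theorem inner_neg_div_smul_add_le (z : E) (hd : ‖d‖ ≤ ρ) {ξ : ℝ} (hξ : 0 < ξ) :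
    ⟪z, -(ρ / ξ) • z + d⟫ ≤ ρ * ξ / 4 :=
  (inner_neg_smul_add_le z hd _).trans
    (mul_sub_div_mul_sq_le ((norm_nonneg d).trans hd) hξ ‖z‖)

theorem robust_control_inner_bound_general (z : E) (hd : ‖d‖ ≤ ρ) {ξ : ℝ} (hξ : 0 < ξ) {r : E}
    (hr : r = if ξ < ‖z‖ then (-(ρ / ‖z‖)) • z else (-(ρ / ξ)) • z) :
    ⟪z, r + d⟫ ≤ ρ * ξ / 4 := by
  have hρ : 0 ≤ ρ := (norm_nonneg d).trans hd
  subst hr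
  split_ifs
  · exact (inner_neg_div_norm_smul_add_nonpos z hd).trans (by positivity)
  · exact inner_neg_div_smul_add_le z hd hξ

end InnerProductSpace

/-- For `z, d ∈ ℝⁿ` with `‖d‖ ≤ ρ`, `ρ ≥ 0`, `ξ > 0`, and the robust
control term `r = −ρ z/‖z‖` if `‖z‖ > ξ` and `r = −(ρ/ξ) z` if `‖z‖ ≤ ξ`, one has
`⟪z, r + d⟫ ≤ ρ ξ / 4`. -/
theorem robust_control_inner_bound
    (n : ℕ) (hn : 0 < n) (z d : EuclideanSpace ℝ (Fin n))
    (ρ : ℝ) (hρ : 0 ≤ ρ) (hd : ‖d‖ ≤ ρ) (ξ : ℝ) (hξ : 0 < ξ)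
    (r : EuclideanSpace ℝ (Fin n))
    (hr : r = if ξ < ‖z‖ then (-(ρ / ‖z‖)) • z else (-(ρ / ξ)) • z) :
    ⟪z, r + d⟫ ≤ ρ * ξ / 4 :=
  robust_control_inner_bound_general z hd hξ hr
end

section
/- Let F ∈ ℝ^{p×p}, G ∈ ℝ^{p×q} be real matrices, let L₁ ≥ 0 and σ ≥ 0, and let (Σ_i)_{i∈ℕ} be a sequence of p×p real matrices with Σ₀ = 0 and Σ_{i+1} = F Σ_i Fᵀ + G (J_i Σ_i J_iᵀ + S_i) Gᵀ, where for each i the matrices J_i ∈ ℝ^{q×p} and S_i ∈ ℝ^{q×q} satisfy ‖J_i‖ ≤ L₁ and ‖S_i‖ ≤ σ² (operator norms). Set a = ‖F‖² + ‖G‖² L₁² and assume a ≠ 1. Then for every i ≥ 0, ‖Σ_i‖ ≤ ((1 − aⁱ)/(1 − a)) · ‖G‖² σ². -/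
open Matrix

/-- The operator (spectral) norm of a real matrix, i.e. the operator norm of the
induced linear map between Euclidean spaces. -/
noncomputable def matOpNorm {m n : Type*} [Fintype m] [Fintype n] [DecidableEq n]
    (A : Matrix m n ℝ) : ℝ :=
  ‖LinearMap.toContinuousLinearMap (Matrix.toEuclideanLin A)‖

section GeometricRecursion

variable {R : Type*} [CommSemiring R] [PartialOrder R] [IsOrderedRing R]

theorem le_pow_mul_add_geom_sum_mul {u : ℕ → R} {a b : R} (ha : 0 ≤ a)
    (hu : ∀ n, u (n + 1) ≤ a * u n + b) (n : ℕ) :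
    u n ≤ a ^ n * u 0 + (∑ k ∈ Finset.range n, a ^ k) * b := by
  have gronwall : u n ≤ u 0 * a ^ n + ∑ k ∈ Finset.range n, b * a ^ (n - (k + 1)) := by
    simpa using discrete_gronwall_prod_general (c := fun _ ↦ a) (b := fun _ ↦ b)
      (fun k _ ↦ hu k) (fun _ _ ↦ ha) n.zero_le
  have sum_eq : ∑ k ∈ Finset.range n, b * a ^ (n - (k + 1)) =
      (∑ k ∈ Finset.range n, a ^ k) * b := by
    rw [← Finset.mul_sum, mul_comm, ← Finset.sum_range_reflect (a ^ ·)]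
    simp only [Nat.sub_sub, add_comm 1]
  rwa [mul_comm (u 0), sum_eq] at gronwall

end GeometricRecursion

section L2OpNorm

open scoped Matrix.Norms.L2Operator

theorem matOpNorm_eq_l2_opNorm {m n : Type*} [Fintype m] [Fintype n] [DecidableEq n]
    (A : Matrix m n ℝ) : matOpNorm A = ‖A‖ :=
  rfl

variable {𝕜 m n k : Type*} [RCLike 𝕜] [Fintype m] [Fintype n] [Fintype k]
  [DecidableEq m] [DecidableEq n] [DecidableEq k]

theorem l2_opNorm_mul_mul_conjTranspose_le (A : Matrix m n 𝕜) (P : Matrix n n 𝕜) :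
    ‖A * P * Aᴴ‖ ≤ ‖A‖ ^ 2 * ‖P‖ :=
  calc ‖A * P * Aᴴ‖ ≤ ‖A * P‖ * ‖Aᴴ‖ := l2_opNorm_mul _ _
    _ ≤ ‖A‖ * ‖P‖ * ‖A‖ := by
      rw [l2_opNorm_conjTranspose]
      gcongr
      exact l2_opNorm_mul _ _
    _ = ‖A‖ ^ 2 * ‖P‖ := by ring

theorem l2_opNorm_covariance_step_le (F : Matrix m n 𝕜) (G : Matrix m k 𝕜)
    (J : Matrix k n 𝕜) (P : Matrix n n 𝕜) (W : Matrix k k 𝕜) :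
    ‖F * P * Fᴴ + G * (J * P * Jᴴ + W) * Gᴴ‖ ≤
      (‖F‖ ^ 2 + ‖G‖ ^ 2 * ‖J‖ ^ 2) * ‖P‖ + ‖G‖ ^ 2 * ‖W‖ := by
  have inner_le : ‖J * P * Jᴴ + W‖ ≤ ‖J‖ ^ 2 * ‖P‖ + ‖W‖ :=
    norm_add_le_of_le (l2_opNorm_mul_mul_conjTranspose_le J P) le_rfl
  calc ‖F * P * Fᴴ + G * (J * P * Jᴴ + W) * Gᴴ‖
      ≤ ‖F‖ ^ 2 * ‖P‖ + ‖G‖ ^ 2 * ‖J * P * Jᴴ + W‖ :=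
        norm_add_le_of_le (l2_opNorm_mul_mul_conjTranspose_le F P)
          (l2_opNorm_mul_mul_conjTranspose_le G _)
    _ ≤ ‖F‖ ^ 2 * ‖P‖ + ‖G‖ ^ 2 * (‖J‖ ^ 2 * ‖P‖ + ‖W‖) := by gcongr
    _ = (‖F‖ ^ 2 + ‖G‖ ^ 2 * ‖J‖ ^ 2) * ‖P‖ + ‖G‖ ^ 2 * ‖W‖ := by ring

theorem covariance_propagation_bound_general (F : Matrix n n 𝕜) (G : Matrix n k 𝕜) {L c : ℝ}
    {S : ℕ → Matrix n n 𝕜} {J : ℕ → Matrix k n 𝕜} {W : ℕ → Matrix k k 𝕜}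
    (hJ : ∀ i, ‖J i‖ ≤ L) (hW : ∀ i, ‖W i‖ ≤ c)
    (hrec : ∀ i, S (i + 1) = F * S i * Fᴴ + G * (J i * S i * (J i)ᴴ + W i) * Gᴴ) (i : ℕ) :
    ‖S i‖ ≤ (‖F‖ ^ 2 + ‖G‖ ^ 2 * L ^ 2) ^ i * ‖S 0‖ +
      (∑ j ∈ Finset.range i, (‖F‖ ^ 2 + ‖G‖ ^ 2 * L ^ 2) ^ j) * (‖G‖ ^ 2 * c) := by
  refine le_pow_mul_add_geom_sum_mul (u := fun i ↦ ‖S i‖) (by positivity) (fun i ↦ ?_) i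
  calc ‖S (i + 1)‖
      ≤ (‖F‖ ^ 2 + ‖G‖ ^ 2 * ‖J i‖ ^ 2) * ‖S i‖ + ‖G‖ ^ 2 * ‖W i‖ :=
        hrec i ▸ l2_opNorm_covariance_step_le F G (J i) (S i) (W i)
    _ ≤ (‖F‖ ^ 2 + ‖G‖ ^ 2 * L ^ 2) * ‖S i‖ + ‖G‖ ^ 2 * c := by
      gcongr
      exacts [hJ i, hW i]

end L2OpNorm

/-- covariance propagation bound.  With `Σ₀ = 0`,
`Σ_{i+1} = F Σ_i Fᵀ + G (J_i Σ_i J_iᵀ + S_i) Gᵀ`, `‖J_i‖ ≤ L₁`, `‖S_i‖ ≤ σ²`, and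
`a = ‖F‖² + ‖G‖² L₁² ≠ 1`, one has `‖Σ_i‖ ≤ ((1 − aⁱ)/(1 − a)) ‖G‖² σ²` for all `i`. -/
theorem covariance_propagation_bound
    (p q : ℕ) (F : Matrix (Fin p) (Fin p) ℝ) (G : Matrix (Fin p) (Fin q) ℝ)
    (L₁ σ : ℝ) (hL₁ : 0 ≤ L₁) (hσ : 0 ≤ σ)
    (S : ℕ → Matrix (Fin p) (Fin p) ℝ) (hS0 : S 0 = 0)
    (J : ℕ → Matrix (Fin q) (Fin p) ℝ) (W : ℕ → Matrix (Fin q) (Fin q) ℝ)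
    (hJ : ∀ i, matOpNorm (J i) ≤ L₁) (hW : ∀ i, matOpNorm (W i) ≤ σ ^ 2)
    (hrec : ∀ i, S (i + 1) = F * S i * Fᵀ + G * (J i * S i * (J i)ᵀ + W i) * Gᵀ)
    (a : ℝ) (ha : a = matOpNorm F ^ 2 + matOpNorm G ^ 2 * L₁ ^ 2) (hane : a ≠ 1) :
    ∀ i, matOpNorm (S i) ≤ (1 - a ^ i) / (1 - a) * (matOpNorm G ^ 2 * σ ^ 2) := by
  intro i
  simp only [matOpNorm_eq_l2_opNorm, ← conjTranspose_eq_transpose_of_trivial]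
    at hJ hW hrec ha ⊢
  have geom_sum : ∑ j ∈ Finset.range i, a ^ j = (1 - a ^ i) / (1 - a) := by
    rw [geom_sum_eq hane, ← neg_div_neg_eq, neg_sub, neg_sub]
  open scoped Matrix.Norms.L2Operator in
  simpa only [← ha, geom_sum, hS0, norm_zero, mul_zero, zero_add] using
    covariance_propagation_bound_general F G hJ hW hrec i
end

section
/- Let R and R* be symmetric positive definite n×n real matrices with λ_max(R) < λ_min(R*), and set λ_R = 2λ_min(R*)/(λ_min(R*) − λ_max(R)). Then for all vectors w, w_d ∈ ℝⁿ with ‖w‖ ≥ λ_R·‖w_d‖ (Euclidean norm), one has wᵀ R w ≤ (w − w_d)ᵀ R* (w − w_d). -/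
open Matrix

/-!
Write `a = λ_max(R)` and `b = λ_min(R*)`. The Rayleigh bounds reduce the claim to
`a ‖w‖² ≤ b ‖w - w_d‖²`. By the reverse triangle inequality
`b ‖w - w_d‖² ≥ b (‖w‖ - ‖w_d‖)² ≥ b ‖w‖² - 2 b ‖w_d‖ ‖w‖`, and the condition on `w` says
`2 b ‖w_d‖ ≤ (b - a) ‖w‖`, which leaves exactly `a ‖w‖²`.
-/

theorem mul_norm_sq_le_mul_norm_sub_sq {E : Type*} [SeminormedAddCommGroup E] {a b : ℝ}
    (hb : 0 ≤ b) {x y : E} (hxy : 2 * b * ‖y‖ ≤ (b - a) * ‖x‖) :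
    a * ‖x‖ ^ 2 ≤ b * ‖x - y‖ ^ 2 := by
  have reverse_triangle : (‖x‖ - ‖y‖) ^ 2 ≤ ‖x - y‖ ^ 2 :=
    sq_le_sq.mpr ((abs_norm_sub_norm_le x y).trans (le_abs_self _))
  calc a * ‖x‖ ^ 2 = b * ‖x‖ ^ 2 - (b - a) * ‖x‖ * ‖x‖ := by ring
    _ ≤ b * ‖x‖ ^ 2 - 2 * b * ‖y‖ * ‖x‖ := by gcongr
    _ ≤ b * ‖x‖ ^ 2 - 2 * b * ‖y‖ * ‖x‖ + b * ‖y‖ ^ 2 := le_add_of_nonneg_right (by positivity)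
    _ = b * (‖x‖ - ‖y‖) ^ 2 := by ring
    _ ≤ b * ‖x - y‖ ^ 2 := by gcongr

section Rayleigh

open scoped MatrixOrder

variable {𝕜 ι : Type*} [RCLike 𝕜] [Fintype ι] {A B : Matrix ι ι 𝕜}

theorem re_star_dotProduct_mulVec_mono (hAB : A ≤ B) (x : ι → 𝕜) :
    RCLike.re (star x ⬝ᵥ A *ᵥ x) ≤ RCLike.re (star x ⬝ᵥ B *ᵥ x) := by
  have nonneg := (Matrix.le_iff.mp hAB).re_dotProduct_nonneg x
  rwa [sub_mulVec, dotProduct_sub, map_sub, sub_nonneg] at nonneg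

variable [DecidableEq ι]

theorem re_star_dotProduct_algebraMap_mulVec (c : ℝ) (x : ι → 𝕜) :
    RCLike.re (star x ⬝ᵥ algebraMap ℝ (Matrix ι ι 𝕜) c *ᵥ x) = c * ‖WithLp.toLp 2 x‖ ^ 2 := by
  rw [Algebra.algebraMap_eq_smul_one, smul_mulVec, one_mulVec, dotProduct_smul, RCLike.smul_re,
    dotProduct_comm, ← EuclideanSpace.inner_toLp_toLp, inner_self_eq_norm_sq]

theorem iInf_eigenvalues_mul_le_re_star_dotProduct_mulVec (hA : A.IsHermitian) (x : ι → 𝕜) :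
    (⨅ i, hA.eigenvalues i) * ‖WithLp.toLp 2 x‖ ^ 2 ≤ RCLike.re (star x ⬝ᵥ A *ᵥ x) := by
  have loewner_le : algebraMap ℝ (Matrix ι ι 𝕜) (⨅ i, hA.eigenvalues i) ≤ A := by
    rw [algebraMap_le_iff_le_spectrum (ha := hA), hA.spectrum_real_eq_range_eigenvalues,
      Set.forall_mem_range]
    exact ciInf_le (Set.finite_range _).bddBelow
  rw [← re_star_dotProduct_algebraMap_mulVec]
  exact re_star_dotProduct_mulVec_mono loewner_le x

theorem re_star_dotProduct_mulVec_le_iSup_eigenvalues_mul (hA : A.IsHermitian) (x : ι → 𝕜) :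
    RCLike.re (star x ⬝ᵥ A *ᵥ x) ≤ (⨆ i, hA.eigenvalues i) * ‖WithLp.toLp 2 x‖ ^ 2 := by
  have loewner_le : A ≤ algebraMap ℝ (Matrix ι ι 𝕜) (⨆ i, hA.eigenvalues i) := by
    rw [le_algebraMap_iff_spectrum_le (ha := hA), hA.spectrum_real_eq_range_eigenvalues,
      Set.forall_mem_range]
    exact le_ciSup (Set.finite_range _).bddAbove
  rw [← re_star_dotProduct_algebraMap_mulVec]
  exact re_star_dotProduct_mulVec_mono loewner_le x

end Rayleigh

open scoped ComplexOrder in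
theorem weighted_input_cost_comparison_general
    {𝕜 ι : Type*} [RCLike 𝕜] [Fintype ι] [DecidableEq ι] {R Rs : Matrix ι ι 𝕜}
    (hR : R.IsHermitian) (hRs : Rs.PosSemidef) {lmaxR lminRs : ℝ}
    (hlmax : lmaxR = ⨆ i, hR.eigenvalues i) (hlmin : lminRs = ⨅ i, hRs.isHermitian.eigenvalues i)
    (hlt : lmaxR < lminRs) {w wd : ι → 𝕜}
    (hw : 2 * lminRs / (lminRs - lmaxR) * ‖WithLp.toLp 2 wd‖ ≤ ‖WithLp.toLp 2 w‖) :
    RCLike.re (star w ⬝ᵥ R *ᵥ w) ≤ RCLike.re (star (w - wd) ⬝ᵥ Rs *ᵥ (w - wd)) := by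
  have lmin_nonneg : 0 ≤ lminRs := hlmin ▸ Real.iInf_nonneg hRs.eigenvalues_nonneg
  have cleared_hw : 2 * lminRs * ‖WithLp.toLp 2 wd‖ ≤ (lminRs - lmaxR) * ‖WithLp.toLp 2 w‖ := by
    rwa [div_mul_eq_mul_div, div_le_iff₀' (sub_pos.mpr hlt)] at hw
  calc RCLike.re (star w ⬝ᵥ R *ᵥ w)
      ≤ lmaxR * ‖WithLp.toLp 2 w‖ ^ 2 :=
      hlmax ▸ re_star_dotProduct_mulVec_le_iSup_eigenvalues_mul hR w
    _ ≤ lminRs * ‖WithLp.toLp 2 (w - wd)‖ ^ 2 :=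
      mul_norm_sq_le_mul_norm_sub_sq lmin_nonneg cleared_hw
    _ ≤ RCLike.re (star (w - wd) ⬝ᵥ Rs *ᵥ (w - wd)) :=
      hlmin ▸ iInf_eigenvalues_mul_le_re_star_dotProduct_mulVec hRs.isHermitian (w - wd)

/-- For symmetric positive definite matrices `R, R*` with
`λ_max(R) < λ_min(R*)` and `λ_R = 2λ_min(R*)/(λ_min(R*) − λ_max(R))`, every pair of
vectors with `‖w‖ ≥ λ_R ‖w_d‖` (Euclidean norm) satisfies
`wᵀ R w ≤ (w − w_d)ᵀ R* (w − w_d)`. -/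
theorem weighted_input_cost_comparison
    (n : ℕ) (hn : 0 < n) (R Rs : Matrix (Fin n) (Fin n) ℝ)
    (hR : R.PosDef) (hRs : Rs.PosDef)
    (lmaxR lminRs : ℝ)
    (hlmax : lmaxR = ⨆ i, hR.isHermitian.eigenvalues i)
    (hlmin : lminRs = ⨅ i, hRs.isHermitian.eigenvalues i)
    (hlt : lmaxR < lminRs)
    (lamR : ℝ) (hlamR : lamR = 2 * lminRs / (lminRs - lmaxR))
    (w wd : Fin n → ℝ)
    (hw : lamR * Real.sqrt (∑ i, wd i ^ 2) ≤ Real.sqrt (∑ i, w i ^ 2)) :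
    w ⬝ᵥ (R *ᵥ w) ≤ (w - wd) ⬝ᵥ (Rs *ᵥ (w - wd)) := by
  subst hlamR
  simpa using weighted_input_cost_comparison_general hR.isHermitian hRs.posSemidef hlmax hlmin hlt
    (w := w) (wd := wd) (by simpa [EuclideanSpace.norm_eq] using hw)
end
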